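/- Let Ω ⊆ ℝ^N be Lebesgue measurable, let 1 < τ < p, η > 0, 0 < c < η, and let ξ : Ω → ℝ be measurable with |ξ(z)| ≤ Ξ for almost all z ∈ Ω and some Ξ ≥ 0. Let f : Ω × ℝ → ℝ be a Carathéodory function with |f(z,x)| ≤ M for almost all z ∈ Ω and all |x| ≤ η (some M ≥ 0), and suppose f(z,x)/(|x|^(τ−2)·x) → +∞ as x → 0 uniformly for almost all z ∈ Ω (i.e. for every K > 0 there is δ > 0 with f(z,x)·x ≥ K·|x|^τ for almost all z and all 0 < |x| ≤ δ). Let λ : ℝ → [0,1] be continuous and even with λ ≡ 1 on [−c, c] and λ ≡ 0 outside (−η, η), and define f̂(z,x) = λ(x)·f(z,x) + (1 − λ(x))·ξ(z)·|x|^(p−2)·x. Then for every η̂ > 0 and every r > p there exists c₁₄ > 0 such that f̂(z,x)·x ≥ η̂·|x|^τ − c₁₄·|x|^r for almost all z ∈ Ω and all x ∈ ℝ. -/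

import Mathlib

/-!
Near `0` (for `|x| ≤ d := min δ c`) the cut-off equals `1`, so the truncation is `f` itself and the
growth hypothesis at `0` with `K = ηhat` already gives the estimate without the `|x|^r` term.
For `|x| ≥ d`, the boundedness of `f` on `[-η, η]` and of `ξ` bounds the truncation times `x` below
by `-M|x| - Ξ|x|^p`, and every power `|x|^s` with `s ≤ r` is at most `d^(s-r) |x|^r`
(`rpow_le_mul_rpow_of_le`), so a large multiple of `|x|^r` absorbs all the terms.
-/

open Set Filter MeasureTheory

/-- Away from the origin, lower powers are dominated by higher ones. -/
lemma rpow_le_mul_rpow_of_le {d t s r : ℝ} (hd : 0 < d) (hdt : d ≤ t) (hsr : s ≤ r) :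
    t ^ s ≤ d ^ (s - r) * t ^ r := by
  have ht : 0 < t := hd.trans_le hdt
  calc t ^ s = t ^ (s - r) * t ^ r := by rw [← Real.rpow_add ht]; congr 1; ring
    _ ≤ d ^ (s - r) * t ^ r := by
      gcongr ?_ * _
      exact Real.rpow_le_rpow_of_nonpos hd hdt (by linarith)

/-- The symmetric truncation `f̂(z,x) = λ(x) f(z,x) + (1−λ(x)) ξ(z) |x|^(p−2) x` satisfies
`f̂(z,x)x ≥ η̂ |x|^τ − c₁₄ |x|^r` for every `η̂ > 0` and `r > p`. -/
theorem truncation_lower_estimate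
    {N : ℕ} (Ω : Set (EuclideanSpace ℝ (Fin N))) (hΩ : MeasurableSet Ω)
    (τ p : ℝ) (hτ : 1 < τ) (hτp : τ < p)
    (η c : ℝ) (hc : 0 < c) (hcη : c < η)
    (ξ : EuclideanSpace ℝ (Fin N) → ℝ) (hξ_meas : Measurable ξ)
    (Ξ : ℝ) (hΞ : 0 ≤ Ξ)
    (hξ_bdd : ∀ᵐ z ∂(volume.restrict Ω), |ξ z| ≤ Ξ)
    (f : EuclideanSpace ℝ (Fin N) → ℝ → ℝ)
    (hf_meas : ∀ x : ℝ, Measurable fun z => f z x)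
    (hf_cont : ∀ᵐ z ∂(volume.restrict Ω), Continuous (f z))
    (M : ℝ) (hM : 0 ≤ M)
    (hf_bdd : ∀ᵐ z ∂(volume.restrict Ω), ∀ x : ℝ, |x| ≤ η → |f z x| ≤ M)
    (hf_super : ∀ K : ℝ, 0 < K → ∃ δ : ℝ, 0 < δ ∧
      ∀ᵐ z ∂(volume.restrict Ω), ∀ x : ℝ, 0 < |x| → |x| ≤ δ →
        K * |x| ^ τ ≤ f z x * x)
    (Λ : ℝ → ℝ) (hΛ_cont : Continuous Λ)
    (hΛ_even : ∀ x : ℝ, Λ (-x) = Λ x)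
    (hΛ_range : ∀ x : ℝ, Λ x ∈ Icc (0:ℝ) 1)
    (hΛ_one : ∀ x ∈ Icc (-c) c, Λ x = 1)
    (hΛ_zero : ∀ x : ℝ, η ≤ |x| → Λ x = 0) :
    ∀ ηhat : ℝ, 0 < ηhat → ∀ r : ℝ, p < r → ∃ c₁₄ : ℝ, 0 < c₁₄ ∧
      ∀ᵐ z ∂(volume.restrict Ω), ∀ x : ℝ,
        ηhat * |x| ^ τ - c₁₄ * |x| ^ r ≤
          (Λ x * f z x + (1 - Λ x) * ξ z * |x| ^ (p - 2) * x) * x := by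
  intro ηhat hηhat r hr
  obtain ⟨δ, hδ, hsup⟩ := hf_super ηhat hηhat
  set d := min δ c with hd_def
  have hd : 0 < d := lt_min hδ hc
  have h₁ : 0 < ηhat * d ^ (τ - r) := by positivity
  have h₂ : 0 ≤ M * d ^ (1 - r) := by positivity
  have h₃ : 0 ≤ Ξ * d ^ (p - r) := by positivity
  refine ⟨ηhat * d ^ (τ - r) + M * d ^ (1 - r) + Ξ * d ^ (p - r), by linarith, ?_⟩
  filter_upwards [hsup, hf_bdd, hξ_bdd] with z hz hfz hξz x
  rcases eq_or_ne x 0 with rfl | hx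
  · have hτ0 : τ ≠ 0 := by linarith
    have hr0 : r ≠ 0 := by linarith
    simp [Real.zero_rpow hτ0, Real.zero_rpow hr0]
  have hxpos : 0 < |x| := abs_pos.mpr hx
  have htr : 0 ≤ |x| ^ r := by positivity
  rcases le_total |x| d with hxd | hdx
  · have hΛ : Λ x = 1 := hΛ_one x (abs_le.mp (hxd.trans (min_le_right _ _)))
    have hfx := hz x hxpos (hxd.trans (min_le_left _ _))
    rw [hΛ]
    simp only [one_mul, sub_self, zero_mul, add_zero]
    have := mul_nonneg (by linarith : 0 ≤ ηhat * d ^ (τ - r) + M * d ^ (1 - r) + Ξ * d ^ (p - r)) htr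
    linarith
  · obtain ⟨hΛ0, hΛ1⟩ := hΛ_range x
    have hfpart : -(M * |x|) ≤ Λ x * f z x * x := by
      rcases le_total η |x| with hηx | hxη
      · rw [hΛ_zero x hηx]
        have : 0 ≤ M * |x| := by positivity
        linarith
      · refine neg_le_of_abs_le ?_
        rw [abs_mul, abs_mul, abs_of_nonneg hΛ0]
        have := mul_le_mul hΛ1 (hfz x hxη) (abs_nonneg _) zero_le_one
        rw [one_mul] at this
        gcongr
    have hpow : |x| ^ (p - 2) * x * x = |x| ^ p := by
      rw [mul_assoc, ← abs_mul_abs_self x, ← sq, ← Real.rpow_natCast, ← Real.rpow_add hxpos]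
      congr 1
      push_cast
      ring
    have hξpart : -(Ξ * |x| ^ p) ≤ (1 - Λ x) * ξ z * |x| ^ p := by
      refine neg_le_of_abs_le ?_
      rw [abs_mul, abs_mul, abs_of_nonneg (by linarith : 0 ≤ 1 - Λ x),
        abs_of_nonneg (by positivity : 0 ≤ |x| ^ p)]
      have := mul_le_mul (by linarith : 1 - Λ x ≤ 1) hξz (abs_nonneg _) zero_le_one
      rw [one_mul] at this
      gcongr
    have hsplit : (Λ x * f z x + (1 - Λ x) * ξ z * |x| ^ (p - 2) * x) * x =
        Λ x * f z x * x + (1 - Λ x) * ξ z * |x| ^ p := by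
      rw [← hpow]
      ring
    have e₁ := mul_le_mul_of_nonneg_left
      (rpow_le_mul_rpow_of_le hd hdx (by linarith : τ ≤ r)) hηhat.le
    have e₂ := mul_le_mul_of_nonneg_left
      (rpow_le_mul_rpow_of_le hd hdx (by linarith : (1 : ℝ) ≤ r)) hM
    have e₃ := mul_le_mul_of_nonneg_left (rpow_le_mul_rpow_of_le hd hdx hr.le) hΞ
    rw [Real.rpow_one] at e₂
    rw [hsplit]
    linarith
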